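/- Let s ≥ 2 and n = T_s + 2. Then a partition λ of n satisfies deg(λ) = Δ_n if and only if λ = (s+1, s−1, s−2, ..., 2, 1, 1). In particular, n has a unique degree-maximizing partition. -/

import Mathlib

/-!
Let `λ` have `r` distinct part sizes, `A` gaps and `B` repeated sizes, and split `λ` as a multiset
into one copy of each part size and the surplus copies. The surplus copies have `B` distinct
positive sizes, so they sum to at least `T B`. The predecessors of the elements just above the gaps
are positive and are not part sizes, so the largest part size is at least `r + A`; removing the
largest part size repeatedly, the distinct sizes sum to at least `T r + T A`. Hence
`T r + T A + T B ≤ n`.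

For `n = T s + 2 < T (s + 1)` this forces `r ≤ s`. If `r < s`, then `A, B ≤ r` already gives
`deg λ ≤ s (s - 1)`. If `r = s`, then `T A + T B ≤ 2`, so `A, B ≤ 1` and `deg λ ≤ s (s - 1) + 2`.
Equality leaves `A = B = 1`, with both sums as small as possible: the part sizes sum to `T s + 1`,
which forces `{1, …, s - 1, s + 1}`, and the surplus sums to `1`, so it is a single `1`.
-/

namespace PartitionDegree

/-- The `m`-th triangular number. -/
def T (m : ℕ) : ℕ := m * (m + 1) / 2

/-- The number of distinct part sizes of a partition. -/
def supp {n : ℕ} (lam : n.Partition) : ℕ := lam.parts.toFinset.card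

/-- The gap-bonus count: distinct part sizes `L ≥ 2` such that `L - 1` is not a part size. -/
def gapBonus {n : ℕ} (lam : n.Partition) : ℕ :=
  (lam.parts.toFinset.filter (fun L => 2 ≤ L ∧ (L - 1) ∉ lam.parts)).card

/-- The multiplicity-bonus count: distinct part sizes occurring with multiplicity at least 2. -/
def multBonus {n : ℕ} (lam : n.Partition) : ℕ :=
  (lam.parts.toFinset.filter (fun L => 2 ≤ lam.parts.count L)).card

/-- The degree of a partition in the partition graph. -/
def deg {n : ℕ} (lam : n.Partition) : ℕ :=
  supp lam * (supp lam - 1) + gapBonus lam + multBonus lam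

/-- The maximal degree over all partitions of `n`. -/
def maxDeg (n : ℕ) : ℕ := Finset.univ.sup (fun lam : n.Partition => deg lam)

/-- `ρ(q)`: the maximum of `a + b` over pairs with `T a + T b ≤ q`. -/
noncomputable def rho (q : ℕ) : ℕ := sSup {c : ℕ | ∃ a b : ℕ, c = a + b ∧ T a + T b ≤ q}

/-- `mu` is the conjugate of `lam`: for each `k ≥ 1`, the multiplicity of `k` in `mu`
equals (number of parts of `lam` that are `≥ k`) minus (number of parts `≥ k + 1`). -/
def IsConjugate {n : ℕ} (lam mu : n.Partition) : Prop :=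
  ∀ k : ℕ, 1 ≤ k →
    mu.parts.count k =
      Multiset.countP (fun p => k ≤ p) lam.parts -
        Multiset.countP (fun p => k + 1 ≤ p) lam.parts

/-! ### Triangular numbers -/

theorem T_succ (m : ℕ) : T (m + 1) = T m + (m + 1) := by
  rw [T, T, show (m + 1) * (m + 1 + 1) = m * (m + 1) + (m + 1) * 2 by ring,
    Nat.add_mul_div_right _ _ two_pos]

theorem T_mono : Monotone T := monotone_nat_of_le_succ fun m ↦ by rw [T_succ]; lia

theorem T_eq_sum_Icc (m : ℕ) : T m = ∑ i ∈ Finset.Icc 1 m, i := by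
  induction m with
  | zero => rfl
  | succ m ih => rw [T_succ, ih, Finset.sum_Icc_succ_top (by lia)]

theorem T_le_T_add_of_le_succ {a b : ℕ} (h : a ≤ b + 1) : T a ≤ T b + a := by
  cases a with
  | zero => exact Nat.zero_le _
  | succ a =>
    rw [T_succ]
    exact Nat.add_le_add_right (T_mono (Nat.le_of_succ_le_succ h)) _

theorem le_one_of_T_le_two {k : ℕ} (h : T k ≤ 2) : k ≤ 1 :=
  Nat.lt_succ_iff.1 <| T_mono.reflect_lt <| h.trans_lt <| show 2 < T 2 by decide

/-! ### Sums of distinct positive integers -/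

/-- The gaps of a finite set `D`, each represented by the element `L` of `D` just above it;
`gapBonus` counts them for the set of part sizes. -/
def gaps (D : Finset ℕ) : Finset ℕ := D.filter fun L ↦ 2 ≤ L ∧ L - 1 ∉ D

theorem card_add_card_gaps_le {D : Finset ℕ} {m : ℕ} (hD : D ⊆ Finset.Icc 1 m) :
    D.card + (gaps D).card ≤ m := by
  have pred_mapsTo : Set.MapsTo Nat.pred (gaps D) (Finset.Icc 1 m \ D : Finset ℕ) := by
    intro L hL
    obtain ⟨hLD, hL_two, hL_pred⟩ := Finset.mem_filter.1 hL
    have hLm := (Finset.mem_Icc.1 (hD hLD)).2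
    exact Finset.mem_sdiff.2
      ⟨Finset.mem_Icc.2 ⟨Nat.le_pred_of_lt hL_two, L.pred_le.trans hLm⟩, hL_pred⟩
  have pred_injOn : Set.InjOn Nat.pred (gaps D : Set ℕ) := fun K hK L hL h ↦
    Nat.pred_inj (two_pos.trans_le (Finset.mem_filter.1 hK).2.1)
      (two_pos.trans_le (Finset.mem_filter.1 hL).2.1) h
  calc
    D.card + (gaps D).card ≤ D.card + (Finset.Icc 1 m \ D).card :=
      Nat.add_le_add_left (Finset.card_le_card_of_injOn _ pred_mapsTo pred_injOn) _
    _ = m := by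
      rw [add_comm, Finset.card_sdiff_add_card_eq_card hD, Nat.card_Icc, Nat.add_sub_cancel]

theorem card_gaps_insert_le (m : ℕ) (D : Finset ℕ) :
    (gaps (insert m D)).card ≤ (gaps D).card + 1 := by
  have hsub : gaps (insert m D) ⊆ insert m (gaps D) := by
    intro L hL
    simp only [gaps, Finset.mem_filter, Finset.mem_insert, not_or] at hL ⊢
    tauto
  exact (Finset.card_le_card hsub).trans (Finset.card_insert_le _ _)

theorem T_card_add_T_card_gaps_le_sum {D : Finset ℕ} (hD : 0 ∉ D) :
    T D.card + T (gaps D).card ≤ ∑ x ∈ D, x := by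
  induction D using Finset.induction_on_max with
  | empty => decide
  | insert m D hlt ih =>
    have hmD : m ∉ D := fun h ↦ lt_irrefl m (hlt m h)
    have ih := ih fun h ↦ hD (Finset.mem_insert_of_mem h)
    have hm : (insert m D).card + (gaps (insert m D)).card ≤ m :=
      card_add_card_gaps_le fun x hx ↦ Finset.mem_Icc.2 ⟨by grind, by grind⟩
    have hgaps := T_le_T_add_of_le_succ (card_gaps_insert_le m D)
    rw [Finset.card_insert_of_notMem hmD] at hm ⊢
    rw [Finset.sum_insert hmD, T_succ]
    lia

theorem T_card_le_sum {D : Finset ℕ} (hD : 0 ∉ D) : T D.card ≤ ∑ x ∈ D, x :=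
  (Nat.le_add_right _ _).trans (T_card_add_T_card_gaps_le_sum hD)

theorem T_card_add_le_sum_add_card {D : Finset ℕ} (hD : 0 ∉ D) {x : ℕ} (hx : x ∈ D) :
    T D.card + x ≤ ∑ y ∈ D, y + D.card := by
  have herase := T_card_le_sum (D := D.erase x) fun h ↦ hD (Finset.mem_of_mem_erase h)
  rw [← Finset.card_erase_add_one hx, T_succ, ← Finset.add_sum_erase D (fun y ↦ y) hx]
  lia

theorem eq_Icc_of_subset {D : Finset ℕ} (hD : D ⊆ Finset.Icc 1 D.card) :
    D = Finset.Icc 1 D.card :=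
  Finset.eq_of_subset_of_card_le hD (by simp)

theorem eq_Icc_of_sum_le {D : Finset ℕ} (hD : 0 ∉ D) (hsum : ∑ x ∈ D, x ≤ T D.card) :
    D = Finset.Icc 1 D.card :=
  eq_Icc_of_subset fun x hx ↦ by
    have := T_card_add_le_sum_add_card hD hx
    exact Finset.mem_Icc.2 ⟨Nat.pos_of_ne_zero (ne_of_mem_of_not_mem hx hD), by lia⟩

theorem eq_insert_Icc_of_sum_eq {D : Finset ℕ} (hD : 0 ∉ D) (hsum : ∑ x ∈ D, x = T D.card + 1) :
    D = insert (D.card + 1) (Finset.Icc 1 (D.card - 1)) := by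
  have hnot : ¬ D ⊆ Finset.Icc 1 D.card := fun h ↦ by
    have := T_eq_sum_Icc D.card
    rw [← eq_Icc_of_subset h] at this
    lia
  obtain ⟨m, hm, hm_notMem⟩ := Finset.not_subset.1 hnot
  have hm_eq : m = D.card + 1 := by
    have hle := T_card_add_le_sum_add_card hD hm
    have hpos : m ≠ 0 := ne_of_mem_of_not_mem hm hD
    rw [Finset.mem_Icc] at hm_notMem
    lia
  subst hm_eq
  have hcard := Finset.card_erase_of_mem hm
  have herase : D.erase (D.card + 1) = Finset.Icc 1 (D.erase (D.card + 1)).card := by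
    refine eq_Icc_of_sum_le (fun h ↦ hD (Finset.mem_of_mem_erase h)) ?_
    have hT := T_succ (D.erase (D.card + 1)).card
    rw [Finset.card_erase_add_one hm] at hT
    have := Finset.add_sum_erase D (fun x ↦ x) hm
    lia
  rw [← hcard, ← herase, Finset.insert_erase hm]

/-! ### Surplus copies in a multiset -/

section Surplus

variable {α : Type*} [DecidableEq α]

/-- What remains of a multiset after removing one copy of each of its elements; the distinct
elements left over are the ones counted by `multBonus`. -/
def surplus (M : Multiset α) : Multiset α := M - M.dedup

theorem toFinset_val_add_surplus (M : Multiset α) : M.toFinset.val + surplus M = M :=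
  add_tsub_cancel_of_le M.dedup_le

theorem mem_surplus {M : Multiset α} {a : α} : a ∈ surplus M ↔ 2 ≤ M.count a := by
  rw [surplus, Multiset.mem_sub, Multiset.count_dedup]
  split_ifs with h
  · rfl
  · simp [Multiset.count_eq_zero_of_notMem h]

theorem mem_of_mem_surplus {M : Multiset α} {a : α} (h : a ∈ surplus M) : a ∈ M :=
  Multiset.mem_of_le (Multiset.sub_le_self _ _) h

end Surplus

theorem T_card_toFinset_le_sum {M : Multiset ℕ} (hM : 0 ∉ M) : T M.toFinset.card ≤ M.sum :=
  calc
    T M.toFinset.card ≤ ∑ x ∈ M.toFinset, x := T_card_le_sum (by rwa [Multiset.mem_toFinset])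
    _ = M.toFinset.val.sum := (Finset.sum_val _).symm
    _ ≤ M.sum := by
      conv_rhs => rw [← toFinset_val_add_surplus M, Multiset.sum_add]
      exact Nat.le_add_right _ _

/-! ### The degree of a partition -/

section Degree

variable {n : ℕ} (lam : n.Partition)

theorem gapBonus_eq_card_gaps : gapBonus lam = (gaps lam.parts.toFinset).card := by
  simp only [gapBonus, gaps, Multiset.mem_toFinset]

theorem multBonus_eq_card_surplus : multBonus lam = (surplus lam.parts).toFinset.card := by
  rw [multBonus]
  congr 1
  ext L
  rw [Finset.mem_filter, Multiset.mem_toFinset, Multiset.mem_toFinset, mem_surplus]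
  exact and_iff_right_of_imp fun h ↦ Multiset.count_pos.1 (two_pos.trans_le h)

theorem zero_notMem_parts : 0 ∉ lam.parts := fun h ↦ (lam.parts_pos h).false

theorem zero_notMem_toFinset_parts : 0 ∉ lam.parts.toFinset := by
  rw [Multiset.mem_toFinset]
  exact zero_notMem_parts lam

theorem sum_toFinset_add_sum_surplus :
    ∑ x ∈ lam.parts.toFinset, x + (surplus lam.parts).sum = n := by
  conv_rhs => rw [← lam.parts_sum, ← toFinset_val_add_surplus lam.parts, Multiset.sum_add]
  rw [Finset.sum_val]
  rfl

theorem T_supp_add_T_gapBonus_le_sum :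
    T (supp lam) + T (gapBonus lam) ≤ ∑ x ∈ lam.parts.toFinset, x := by
  rw [gapBonus_eq_card_gaps]
  exact T_card_add_T_card_gaps_le_sum (zero_notMem_toFinset_parts lam)

theorem T_multBonus_le_sum_surplus : T (multBonus lam) ≤ (surplus lam.parts).sum := by
  rw [multBonus_eq_card_surplus]
  exact T_card_toFinset_le_sum fun h ↦ zero_notMem_parts lam (mem_of_mem_surplus h)

theorem T_supp_add_T_gapBonus_add_T_multBonus_le :
    T (supp lam) + T (gapBonus lam) + T (multBonus lam) ≤ n :=
  (Nat.add_le_add (T_supp_add_T_gapBonus_le_sum lam) (T_multBonus_le_sum_surplus lam)).trans_eq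
    (sum_toFinset_add_sum_surplus lam)

theorem deg_le_succ_supp_mul_supp : deg lam ≤ (supp lam + 1) * supp lam := by
  have hA : gapBonus lam ≤ supp lam := Finset.card_filter_le _ _
  have hB : multBonus lam ≤ supp lam := Finset.card_filter_le _ _
  calc
    deg lam ≤ supp lam * (supp lam - 1) + supp lam + supp lam :=
      Nat.add_le_add (Nat.add_le_add_left hA _) hB
    _ = (supp lam + 1) * supp lam := by
      cases supp lam with
      | zero => rfl
      | succ r => rw [Nat.add_sub_cancel]; ring

variable {lam}

theorem supp_eq_of_lt_deg {s : ℕ} (hn : n < T (s + 1)) (hdeg : s * (s - 1) < deg lam) :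
    supp lam = s := by
  have hT := T_supp_add_T_gapBonus_add_T_multBonus_le lam
  have hle : supp lam ≤ s :=
    Nat.lt_succ_iff.1 <| T_mono.reflect_lt (b := s + 1) (by lia)
  refine hle.eq_of_not_lt fun hlt ↦ hdeg.not_ge ?_
  exact (deg_le_succ_supp_mul_supp lam).trans (Nat.mul_le_mul hlt (Nat.le_pred_of_lt hlt))

end Degree

/-! ### The extremal partition -/

/-- The partition `(s + 1, s - 1, …, 2, 1, 1)` of `T s + 2`, which will be the degree maximizer for
`s ≥ 2`. For `s = 0` and `s = 1` the encoding yields `(1, 1)` and `(2, 1)`. -/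
def extremal (s : ℕ) : (T s + 2).Partition where
  parts := (s + 1) ::ₘ 1 ::ₘ (Finset.Icc 1 (s - 1)).val
  parts_pos := by
    intro i hi
    simp only [Multiset.mem_cons, Finset.mem_val, Finset.mem_Icc] at hi
    lia
  parts_sum := by
    have sum_Icc : (Finset.Icc 1 (s - 1)).val.sum = T (s - 1) :=
      (Finset.sum_val _).trans (T_eq_sum_Icc _).symm
    rw [Multiset.sum_cons, Multiset.sum_cons, sum_Icc]
    cases s with
    | zero => rfl
    | succ k => rw [T_succ, Nat.add_sub_cancel]; ring

theorem parts_extremal (s : ℕ) :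
    (extremal s).parts = (insert (s + 1) (Finset.Icc 1 (s - 1))).val + {1} := by
  rw [Finset.insert_val_of_notMem (by simp), add_comm _ {1}, Multiset.singleton_add,
    Multiset.cons_swap]
  rfl

theorem toFinset_parts_extremal {s : ℕ} (hs : 2 ≤ s) :
    (extremal s).parts.toFinset = insert (s + 1) (Finset.Icc 1 (s - 1)) := by
  rw [parts_extremal, Multiset.toFinset_add, Finset.val_toFinset, Multiset.toFinset_singleton,
    Finset.union_eq_left, Finset.singleton_subset_iff]
  exact Finset.mem_insert_of_mem (Finset.mem_Icc.2 ⟨le_rfl, by lia⟩)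

theorem surplus_parts_extremal {s : ℕ} (hs : 2 ≤ s) : surplus (extremal s).parts = {1} := by
  have h := (toFinset_val_add_surplus (extremal s).parts).trans (parts_extremal s)
  rw [toFinset_parts_extremal hs] at h
  exact add_left_cancel h

theorem supp_extremal {s : ℕ} (hs : 2 ≤ s) : supp (extremal s) = s := by
  rw [supp, toFinset_parts_extremal hs, Finset.card_insert_of_notMem (by simp), Nat.card_Icc]
  lia

theorem gapBonus_extremal {s : ℕ} (hs : 2 ≤ s) : gapBonus (extremal s) = 1 := by
  rw [gapBonus_eq_card_gaps, toFinset_parts_extremal hs, Finset.card_eq_one]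
  refine ⟨s + 1, ?_⟩
  ext L
  simp only [gaps, Finset.mem_filter, Finset.mem_insert, Finset.mem_Icc, Finset.mem_singleton]
  lia

theorem multBonus_extremal {s : ℕ} (hs : 2 ≤ s) : multBonus (extremal s) = 1 := by
  rw [multBonus_eq_card_surplus, surplus_parts_extremal hs, Multiset.toFinset_singleton,
    Finset.card_singleton]

theorem deg_extremal {s : ℕ} (hs : 2 ≤ s) : deg (extremal s) = s * (s - 1) + 2 := by
  rw [deg, supp_extremal hs, gapBonus_extremal hs, multBonus_extremal hs]

theorem eq_extremal_of_supp_eq {s : ℕ} {lam : (T s + 2).Partition} (hsupp : supp lam = s)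
    (hgap : gapBonus lam = 1) (hmult : multBonus lam = 1) : lam = extremal s := by
  have hD := T_supp_add_T_gapBonus_le_sum lam
  have hE := T_multBonus_le_sum_surplus lam
  have hsum := sum_toFinset_add_sum_surplus lam
  have hT1 : T 1 = 1 := rfl
  rw [hsupp, hgap] at hD
  rw [hmult] at hE
  have hparts : lam.parts.toFinset = insert (s + 1) (Finset.Icc 1 (s - 1)) := by
    rw [supp] at hsupp
    have := eq_insert_Icc_of_sum_eq (zero_notMem_toFinset_parts lam) (by rw [hsupp]; lia)
    rwa [hsupp] at this
  have hsurplus : surplus lam.parts = {1} :=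
    Nat.Partition.partition_one_parts
      ⟨surplus lam.parts, fun h ↦ lam.parts_pos (mem_of_mem_surplus h), by lia⟩
  ext1
  rw [parts_extremal, ← toFinset_val_add_surplus lam.parts, hparts, hsurplus]

/-! ### The maximal degree -/

theorem supp_eq_and_bonuses_le_one {s : ℕ} (hs : 2 ≤ s) {lam : (T s + 2).Partition}
    (hdeg : s * (s - 1) < deg lam) :
    supp lam = s ∧ gapBonus lam ≤ 1 ∧ multBonus lam ≤ 1 := by
  have hsupp : supp lam = s := supp_eq_of_lt_deg (by rw [T_succ]; lia) hdeg
  have hT := T_supp_add_T_gapBonus_add_T_multBonus_le lam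
  rw [hsupp] at hT
  exact ⟨hsupp, le_one_of_T_le_two (by lia), le_one_of_T_le_two (by lia)⟩

theorem deg_T_add_two_le {s : ℕ} (hs : 2 ≤ s) (lam : (T s + 2).Partition) :
    deg lam ≤ s * (s - 1) + 2 := by
  by_contra! hlt
  obtain ⟨hsupp, hgap, hmult⟩ := supp_eq_and_bonuses_le_one hs (lam := lam) (by lia)
  rw [deg, hsupp] at hlt
  lia

theorem deg_eq_iff_eq_extremal {s : ℕ} (hs : 2 ≤ s) (lam : (T s + 2).Partition) :
    deg lam = s * (s - 1) + 2 ↔ lam = extremal s := by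
  refine ⟨fun hdeg ↦ ?_, fun h ↦ h ▸ deg_extremal hs⟩
  obtain ⟨hsupp, hgap, hmult⟩ := supp_eq_and_bonuses_le_one hs (lam := lam) (by lia)
  rw [deg, hsupp] at hdeg
  exact eq_extremal_of_supp_eq hsupp (by lia) (by lia)

theorem maxDeg_T_add_two {s : ℕ} (hs : 2 ≤ s) : maxDeg (T s + 2) = s * (s - 1) + 2 :=
  le_antisymm (Finset.sup_le fun lam _ ↦ deg_T_add_two_le hs lam)
    ((deg_extremal hs).symm.trans_le (Finset.le_sup (f := deg) (Finset.mem_univ _)))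

/-- for `n = T s + 2` with `s ≥ 2`, the unique degree maximizer is
`(s+1, s-1, …, 2, 1, 1)`. -/
theorem second_window (s : ℕ) (hs : 2 ≤ s) :
    (∀ lam : (T s + 2).Partition,
        deg lam = maxDeg (T s + 2) ↔
          lam.parts = (s + 1) ::ₘ 1 ::ₘ (Finset.Icc 1 (s - 1)).val) ∧
      (Finset.univ.filter
          (fun lam : (T s + 2).Partition => deg lam = maxDeg (T s + 2))).card = 1 := by
  have key (lam : (T s + 2).Partition) : deg lam = maxDeg (T s + 2) ↔ lam = extremal s := by
    rw [maxDeg_T_add_two hs, deg_eq_iff_eq_extremal hs]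
  refine ⟨fun lam ↦ (key lam).trans Nat.Partition.ext_iff, Finset.card_eq_one.2 ⟨extremal s, ?_⟩⟩
  ext lam
  rw [Finset.mem_filter_univ, Finset.mem_singleton, key]

end PartitionDegree
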